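/- Assume the nonatomicity assumption and fix a real number k̄ ∈ (0, L). Define G(t) = ∑_{ℓ=1}^L μ({x : p_ℓ(x) ≥ t}) for t ∈ ℝ, and define the set-valued classifier Γ*_{k̄} by Γ*_{k̄}(x) = {ℓ ∈ Fin L : p_ℓ(x) ≥ G^{-1}(k̄)}, where G^{-1} is the generalized inverse of G. Then Γ*_{k̄} is feasible, i.e. size(Γ*_{k̄}) ≤ k̄, and it is optimal: every set-valued classifier Γ with size(Γ) ≤ k̄ satisfies error(Γ*_{k̄}) ≤ error(Γ). -/

import Mathlib

open MeasureTheory Finset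

/-! The threshold classifier minimizes the Lagrangian `error + θ · size` pointwise, since adding a
class `ℓ` to `Γ x` changes the integrand by `θ - p x ℓ`. As `G` is continuous, `G (G⁻¹ k̄) = k̄`, so
the threshold classifier at level `G⁻¹ k̄` has average size exactly `k̄`; since `G⁻¹ k̄ ≥ 0`,
comparing its Lagrangian with that of a classifier of size at most `k̄` compares the error rates. -/

lemma sum_le_sum_filter_nonneg {ι M : Type*} [Fintype ι] [AddCommMonoid M] [LinearOrder M]
    [IsOrderedAddMonoid M] (s : Finset ι) (f : ι → M) :
    ∑ i ∈ s, f i ≤ ∑ i with 0 ≤ f i, f i :=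
  calc ∑ i ∈ s, f i ≤ ∑ i ∈ s with 0 ≤ f i, f i := by
        rw [sum_filter]
        refine sum_le_sum fun i _ ↦ ?_
        split_ifs with hi
        exacts [le_rfl, (not_le.mp hi).le]
    _ ≤ ∑ i with 0 ≤ f i, f i :=
        sum_le_sum_of_subset_of_nonneg (filter_subset_filter _ (subset_univ s))
          fun _ hi _ ↦ (mem_filter.mp hi).2

section GeneralizedInverse

variable {α β : Type*}

/-- The generalized inverse `F⁻¹(u) = inf {t | F t ≤ u}` of a nonincreasing function. It has a
meaningful value only when `{t | F t ≤ u}` is nonempty and bounded below. -/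
def generalizedInverse [InfSet α] [LE β] (F : α → β) (u : β) : α :=
  sInf {t | F t ≤ u}

lemma mem_lowerBounds_sublevel_of_antitone [LinearOrder α] [Preorder β] {F : α → β} {a : α} {u : β}
    (hF : Antitone F) (ha : u < F a) : a ∈ lowerBounds {t | F t ≤ u} :=
  fun _ ht ↦ (hF.reflect_lt (lt_of_le_of_lt ht ha)).le

variable [ConditionallyCompleteLinearOrder α]

lemma le_generalizedInverse [Preorder β] {F : α → β} {a b : α} {u : β}
    (hF : Antitone F) (ha : u < F a) (hb : F b ≤ u) : a ≤ generalizedInverse F u :=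
  le_csInf ⟨b, hb⟩ (mem_lowerBounds_sublevel_of_antitone hF ha)

lemma apply_generalizedInverse [TopologicalSpace α] [OrderTopology α] [DenselyOrdered α]
    [NoMinOrder α] [LinearOrder β] [TopologicalSpace β] [OrderClosedTopology β] {F : α → β}
    {a b : α} {u : β} (hF : Antitone F) (hFc : Continuous F) (ha : u < F a) (hb : F b ≤ u) :
    F (generalizedInverse F u) = u := by
  have hbdd : BddBelow {t | F t ≤ u} := ⟨a, mem_lowerBounds_sublevel_of_antitone hF ha⟩
  apply le_antisymm
  · exact (isClosed_le hFc continuous_const).csInf_mem ⟨b, hb⟩ hbdd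
  · refine ge_of_tendsto
      (hFc.continuousWithinAt (s := Set.Iio (generalizedInverse F u))) ?_
    filter_upwards [self_mem_nhdsWithin] with s hs
    exact (not_le.mp fun hsu ↦ notMem_of_lt_csInf hs hbdd hsu).le

end GeneralizedInverse

section Tail

variable {α : Type*} [LinearOrder α] [TopologicalSpace α] [OrderClosedTopology α]
  [MeasurableSpace α] [OpensMeasurableSpace α] (ν : Measure α) [IsFiniteMeasure ν]

lemma continuous_measureReal_Ici [FirstCountableTopology α] [NullSingletonClass ν] :
    Continuous fun t ↦ ν.real (Set.Ici t) := by
  refine continuous_iff_continuousAt.mpr fun t ↦ ?_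
  refine (ENNReal.tendsto_toReal (measure_ne_top ν _)).comp ?_
  refine tendsto_measure_of_ae_tendsto_indicator_of_isFiniteMeasure _ measurableSet_Ici
    (fun _ ↦ measurableSet_Ici) ?_
  filter_upwards [Measure.ae_ne ν t] with x hx
  rcases hx.lt_or_gt with hxt | htx
  · filter_upwards [Ioi_mem_nhds hxt] with s (hs : x < s)
    simp [hs.not_ge, hxt.not_ge]
  · filter_upwards [Iio_mem_nhds htx] with s (hs : s < x)
    simp [hs.le, htx.le]

lemma tendsto_measureReal_Ici_atTop [NoMaxOrder α]
    [(Filter.atTop : Filter α).IsCountablyGenerated] :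
    Filter.Tendsto (fun t ↦ ν.real (Set.Ici t)) Filter.atTop (nhds 0) := by
  rw [← measureReal_empty (μ := ν)]
  refine (ENNReal.tendsto_toReal (measure_ne_top ν _)).comp ?_
  refine tendsto_measure_of_ae_tendsto_indicator_of_isFiniteMeasure _ .empty
    (fun _ ↦ measurableSet_Ici) (.of_forall fun x ↦ ?_)
  filter_upwards [Filter.eventually_gt_atTop x] with t ht
  simp [ht]

end Tail

section SumMem

variable {𝒳 ι E : Type*}

lemma sum_mem_eq_sum_indicator [Fintype ι] [AddCommMonoid E] (Γ : 𝒳 → Finset ι) (f : 𝒳 → ι → E) :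
    (fun x ↦ ∑ ℓ ∈ Γ x, f x ℓ) = fun x ↦ ∑ ℓ, {y | ℓ ∈ Γ y}.indicator (f · ℓ) x := by
  classical
  funext x
  simp [Set.indicator_apply, sum_ite_mem]

lemma measurableSet_mem_of_measurable [MeasurableSpace 𝒳] {Γ : 𝒳 → Finset ι}
    (hΓ : Measurable[_, ⊤] Γ) (ℓ : ι) : MeasurableSet {x | ℓ ∈ Γ x} :=
  hΓ (t := {s | ℓ ∈ s}) MeasurableSpace.measurableSet_top

lemma integrable_sum_mem [Finite ι] [MeasurableSpace 𝒳] {μ : Measure 𝒳} [NormedAddCommGroup E]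
    {Γ : 𝒳 → Finset ι} {f : 𝒳 → ι → E} (hf : ∀ ℓ, Integrable (f · ℓ) μ)
    (hΓ : ∀ ℓ, NullMeasurableSet {x | ℓ ∈ Γ x} μ) :
    Integrable (fun x ↦ ∑ ℓ ∈ Γ x, f x ℓ) μ := by
  have := Fintype.ofFinite ι
  rw [sum_mem_eq_sum_indicator]
  exact integrable_finsetSum _ fun ℓ _ ↦ (hf ℓ).indicator₀ (hΓ ℓ)

end SumMem

section SetValuedClassifier

variable {𝒳 ι : Type*} [MeasurableSpace 𝒳] {μ : Measure 𝒳} {p : 𝒳 → ι → ℝ} {Γ : 𝒳 → Finset ι}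
  {θ k : ℝ}

/-- The average size `E|Γ(X)|` of a set-valued classifier, where `X` has law `μ`. -/
noncomputable def averageSize (μ : Measure 𝒳) (Γ : 𝒳 → Finset ι) : ℝ :=
  ∫ x, ((Γ x).card : ℝ) ∂μ

/-- The error rate `E[1 - ∑_{ℓ ∈ Γ(X)} p_ℓ(X)]` of a set-valued classifier. It equals
`P(Y ∉ Γ(X))` when `p_ℓ` are the conditional class probabilities; for arbitrary scores `p` it
still ranks the classifiers by their expected captured score. -/
noncomputable def errorRate (μ : Measure 𝒳) (p : 𝒳 → ι → ℝ) (Γ : 𝒳 → Finset ι) : ℝ :=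
  ∫ x, (1 - ∑ ℓ ∈ Γ x, p x ℓ) ∂μ

lemma errorRate_add_mul_averageSize [Finite ι] [IsFiniteMeasure μ]
    (hp : ∀ ℓ, Integrable (p · ℓ) μ) (hΓ : ∀ ℓ, NullMeasurableSet {x | ℓ ∈ Γ x} μ) :
    errorRate μ p Γ + θ * averageSize μ Γ = ∫ x, (1 - ∑ ℓ ∈ Γ x, (p x ℓ - θ)) ∂μ := by
  have hcard : Integrable (fun x ↦ ((Γ x).card : ℝ)) μ := by
    simpa using integrable_sum_mem (f := fun _ _ ↦ (1 : ℝ)) (fun _ ↦ integrable_const 1) hΓ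
  have herror : Integrable (fun x ↦ 1 - ∑ ℓ ∈ Γ x, p x ℓ) μ :=
    (integrable_const 1).sub (integrable_sum_mem hp hΓ)
  rw [errorRate, averageSize, ← integral_const_mul, ← integral_add herror (hcard.const_mul θ)]
  congr with x
  rw [sum_sub_distrib, sum_const, nsmul_eq_mul]
  ring

variable [Fintype ι]

/-- The function `G(t) = ∑_ℓ μ(p_ℓ ≥ t)`, the sum over the classes of the tail functions of the
scores. -/
noncomputable def tailSum (μ : Measure 𝒳) (p : 𝒳 → ι → ℝ) (t : ℝ) : ℝ :=
  ∑ ℓ, μ.real {x | t ≤ p x ℓ}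

/-- The set-valued classifier that returns all classes with score at least `θ`. -/
noncomputable def thresholdClassifier (p : 𝒳 → ι → ℝ) (θ : ℝ) (x : 𝒳) : Finset ι :=
  univ.filter fun ℓ ↦ θ ≤ p x ℓ

lemma antitone_tailSum [IsFiniteMeasure μ] : Antitone (tailSum μ p) := fun _ _ hst ↦
  sum_le_sum fun _ _ ↦ measureReal_mono fun _ hx ↦ hst.trans hx

lemma tailSum_eq_sum_map_real_Ici (hp : ∀ ℓ, AEMeasurable (p · ℓ) μ) :
    tailSum μ p = fun t ↦ ∑ ℓ, (μ.map (p · ℓ)).real (Set.Ici t) := by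
  funext t
  refine sum_congr rfl fun ℓ _ ↦ ?_
  rw [map_measureReal_apply_of_aemeasurable (hp ℓ) measurableSet_Ici]
  rfl

lemma continuous_tailSum [IsFiniteMeasure μ] (hp : ∀ ℓ, AEMeasurable (p · ℓ) μ)
    (hatom : ∀ ℓ t, μ {x | p x ℓ = t} = 0) : Continuous (tailSum μ p) := by
  rw [tailSum_eq_sum_map_real_Ici hp]
  refine continuous_finsetSum _ fun ℓ _ ↦ ?_
  have : NullSingletonClass (μ.map (p · ℓ)) := ⟨fun t ↦ by
    rw [Measure.map_apply_of_aemeasurable (hp ℓ) (measurableSet_singleton t)]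
    exact hatom ℓ t⟩
  exact continuous_measureReal_Ici _

lemma tendsto_tailSum_atTop [IsFiniteMeasure μ] (hp : ∀ ℓ, AEMeasurable (p · ℓ) μ) :
    Filter.Tendsto (tailSum μ p) Filter.atTop (nhds 0) := by
  rw [tailSum_eq_sum_map_real_Ici hp]
  simpa using tendsto_finsetSum univ fun ℓ _ ↦ tendsto_measureReal_Ici_atTop (μ.map (p · ℓ))

lemma tailSum_eq_card_mul {t : ℝ} (hp : ∀ x ℓ, t ≤ p x ℓ) :
    tailSum μ p t = Fintype.card ι * μ.real Set.univ := by
  simp [tailSum, hp]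

lemma nullMeasurableSet_mem_thresholdClassifier (hp : ∀ ℓ, AEMeasurable (p · ℓ) μ) (ℓ : ι) :
    NullMeasurableSet {x | ℓ ∈ thresholdClassifier p θ x} μ := by
  simpa [thresholdClassifier] using nullMeasurableSet_le aemeasurable_const (hp ℓ)

variable [IsFiniteMeasure μ]

lemma integrable_of_nonneg_of_sum_eq_one (hp : ∀ ℓ, AEStronglyMeasurable (p · ℓ) μ)
    (hp0 : ∀ x ℓ, 0 ≤ p x ℓ) (hpsum : ∀ x, ∑ ℓ, p x ℓ = 1) (ℓ : ι) :
    Integrable (p · ℓ) μ := by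
  refine .of_bound (hp ℓ) 1 (.of_forall fun x ↦ ?_)
  rw [Real.norm_of_nonneg (hp0 x ℓ), ← hpsum x]
  exact single_le_sum (fun i _ ↦ hp0 x i) (mem_univ ℓ)

lemma averageSize_eq_sum (hΓ : ∀ ℓ, NullMeasurableSet {x | ℓ ∈ Γ x} μ) :
    averageSize μ Γ = ∑ ℓ, μ.real {x | ℓ ∈ Γ x} := by
  simp_rw [averageSize, card_eq_sum_ones, Nat.cast_sum, Nat.cast_one]
  rw [sum_mem_eq_sum_indicator Γ fun _ _ ↦ 1,
    integral_finsetSum _ fun ℓ _ ↦ (integrable_const 1).indicator₀ (hΓ ℓ)]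
  simp [integral_indicator₀ (hΓ _)]

lemma averageSize_thresholdClassifier (hp : ∀ ℓ, AEMeasurable (p · ℓ) μ) :
    averageSize μ (thresholdClassifier p θ) = tailSum μ p θ := by
  rw [averageSize_eq_sum (nullMeasurableSet_mem_thresholdClassifier hp)]
  simp [thresholdClassifier, tailSum]

lemma errorRate_add_mul_averageSize_thresholdClassifier_le (hp : ∀ ℓ, Integrable (p · ℓ) μ)
    (hΓ : ∀ ℓ, NullMeasurableSet {x | ℓ ∈ Γ x} μ) :
    errorRate μ p (thresholdClassifier p θ) + θ * averageSize μ (thresholdClassifier p θ) ≤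
      errorRate μ p Γ + θ * averageSize μ Γ := by
  have hΓθ := nullMeasurableSet_mem_thresholdClassifier (θ := θ) fun ℓ ↦ (hp ℓ).aemeasurable
  have hpθ : ∀ ℓ, Integrable (fun x ↦ p x ℓ - θ) μ := fun ℓ ↦ (hp ℓ).sub (integrable_const θ)
  rw [errorRate_add_mul_averageSize hp hΓθ, errorRate_add_mul_averageSize hp hΓ]
  refine integral_mono ((integrable_const 1).sub (integrable_sum_mem hpθ hΓθ))
    ((integrable_const 1).sub (integrable_sum_mem hpθ hΓ)) fun x ↦ ?_
  refine sub_le_sub_left ?_ 1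
  simpa only [thresholdClassifier, sub_nonneg] using
    sum_le_sum_filter_nonneg (Γ x) fun ℓ ↦ p x ℓ - θ

lemma errorRate_thresholdClassifier_le (hp : ∀ ℓ, Integrable (p · ℓ) μ) (hθ : 0 ≤ θ)
    (hΓ : ∀ ℓ, NullMeasurableSet {x | ℓ ∈ Γ x} μ)
    (hsize : averageSize μ Γ ≤ averageSize μ (thresholdClassifier p θ)) :
    errorRate μ p (thresholdClassifier p θ) ≤ errorRate μ p Γ := by
  have hlagrangian := errorRate_add_mul_averageSize_thresholdClassifier_le (θ := θ) hp hΓ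
  have hpenalty := mul_le_mul_of_nonneg_left hsize hθ
  linarith

theorem average_size_control_oracle_general (hp : ∀ ℓ, Integrable (p · ℓ) μ)
    (hatom : ∀ ℓ t, μ {x | p x ℓ = t} = 0) (hk0 : 0 < k) (hk : k < tailSum μ p 0) :
    averageSize μ (thresholdClassifier p (generalizedInverse (tailSum μ p) k)) ≤ k ∧
    ∀ Γ : 𝒳 → Finset ι, (∀ ℓ, NullMeasurableSet {x | ℓ ∈ Γ x} μ) → averageSize μ Γ ≤ k →
      errorRate μ p (thresholdClassifier p (generalizedInverse (tailSum μ p) k)) ≤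
        errorRate μ p Γ := by
  have hpm : ∀ ℓ, AEMeasurable (p · ℓ) μ := fun ℓ ↦ (hp ℓ).aemeasurable
  obtain ⟨b, hb⟩ := ((tendsto_tailSum_atTop hpm).eventually_le_const hk0).exists
  have hsize : averageSize μ (thresholdClassifier p (generalizedInverse (tailSum μ p) k)) = k := by
    rw [averageSize_thresholdClassifier hpm,
      apply_generalizedInverse antitone_tailSum (continuous_tailSum hpm hatom) hk hb]
  exact ⟨hsize.le, fun Γ hΓ hΓk ↦ errorRate_thresholdClassifier_le hp
    (le_generalizedInverse antitone_tailSum hk hb) hΓ (hΓk.trans_eq hsize.symm)⟩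

end SetValuedClassifier

/-- under nonatomicity, the thresholding classifier at level
G⁻¹(k̄) is feasible for the average size constraint and minimizes the error
rate among all classifiers of average size at most k̄. -/
theorem average_size_control_oracle
    {𝒳 : Type*} [m𝒳 : MeasurableSpace 𝒳] (μ : Measure 𝒳) [IsProbabilityMeasure μ]
    (L : ℕ) (hL : 1 ≤ L)
    (p : 𝒳 → Fin L → ℝ) (hp : Measurable p)
    (hp0 : ∀ x ℓ, 0 ≤ p x ℓ) (hpsum : ∀ x, ∑ ℓ, p x ℓ = 1)
    (hatom : ∀ (ℓ : Fin L) (t : ℝ), μ {x | p x ℓ = t} = 0)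
    (kbar : ℝ) (hkbar0 : 0 < kbar) (hkbarL : kbar < L)
    (G : ℝ → ℝ) (hG : G = fun t => ∑ ℓ : Fin L, (μ {x | t ≤ p x ℓ}).toReal)
    (θ : ℝ) (hθ : θ = sInf {t : ℝ | G t ≤ kbar})
    (Γstar : 𝒳 → Finset (Fin L))
    (hΓstar : ∀ x, Γstar x = Finset.univ.filter (fun ℓ => θ ≤ p x ℓ)) :
    (∫ x, ((Γstar x).card : ℝ) ∂μ) ≤ kbar ∧
    ∀ Γ : 𝒳 → Finset (Fin L), @Measurable 𝒳 (Finset (Fin L)) m𝒳 ⊤ Γ →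
      (∫ x, ((Γ x).card : ℝ) ∂μ) ≤ kbar →
      (∫ x, (1 - ∑ ℓ ∈ Γstar x, p x ℓ) ∂μ) ≤ ∫ x, (1 - ∑ ℓ ∈ Γ x, p x ℓ) ∂μ := by
  obtain rfl : Γstar = thresholdClassifier p θ := funext hΓstar
  subst hG hθ
  have hp_int := integrable_of_nonneg_of_sum_eq_one (μ := μ)
    (fun _ ↦ hp.eval.aestronglyMeasurable) hp0 hpsum
  have hkbar : kbar < tailSum μ p 0 := by simpa [tailSum_eq_card_mul (hp0 ·)] using hkbarL
  obtain ⟨hsize, hopt⟩ := average_size_control_oracle_general hp_int hatom hkbar0 hkbar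
  exact ⟨hsize, fun Γ hΓ ↦ hopt Γ fun ℓ ↦ (measurableSet_mem_of_measurable hΓ ℓ).nullMeasurableSet⟩
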